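/- Let $0<\alpha<1$ and let $S_N(\tau)$ be the $N$-th partial sum of the binomial series of $(1-\tau)^\alpha$. Then for all $\tau$ in the open unit disc and all $N$, $|((1-\tau)S_N'(\tau))'| \le c(1-|\tau|)^{\alpha-1}$ where $c = \alpha + \alpha(1-\alpha)$. -/

import Mathlib

/-- The generalized binomial coefficient `α(α-1)⋯(α-n+1)/n!`. -/
noncomputable def gbinom (α : ℝ) (n : ℕ) : ℝ :=
  (∏ i ∈ Finset.range n, (α - i)) / n.factorial

/-- The partial sums `S_N(τ) = 1 - ∑_{n=1}^N |binom α n| τ^n` of the binomial series. -/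
noncomputable def Spart (α : ℝ) (N : ℕ) (τ : ℂ) : ℂ :=
  1 - ∑ n ∈ Finset.Icc 1 N, ((|gbinom α n| : ℝ) : ℂ) * τ ^ n

/-- Coefficients of minus the derivative of the partial sums. -/
noncomputable def cA (α : ℝ) (k : ℕ) : ℝ := (k + 1) * |gbinom α (k + 1)|

lemma cA_nonneg (α : ℝ) (k : ℕ) : 0 ≤ cA α k := by unfold cA; positivity

lemma cA_zero (α : ℝ) (h : 0 < α) : cA α 0 = α := by
  simp [cA, gbinom, abs_of_pos h]

lemma cA_succ (α : ℝ) (h : α < 1) (k : ℕ) :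
    ((k : ℝ) + 1) * cA α (k + 1) = (k + 1 - α) * cA α k := by
  have hk : (0 : ℝ) ≤ k := k.cast_nonneg
  have h2 : gbinom α (k + 1 + 1) = gbinom α (k + 1) * (α - (k + 1)) / (k + 2) := by
    unfold gbinom
    rw [Finset.prod_range_succ, Nat.factorial_succ (k + 1)]
    have := Nat.factorial_pos (k + 1)
    push_cast
    field_simp
    ring
  unfold cA
  rw [h2, abs_div, abs_mul, abs_of_neg (show α - (k + 1) < 0 by linarith),
    abs_of_pos (show (0 : ℝ) < k + 2 by linarith)]
  push_cast
  field_simp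
  ring

lemma cA_sum (α : ℝ) (h : α < 1) (M : ℕ) :
    (M : ℝ) * cA α M = (1 - α) * ∑ k ∈ Finset.range M, cA α k := by
  induction M with
  | zero => simp
  | succ M ih =>
    rw [Finset.sum_range_succ]
    push_cast
    rw [cA_succ α h]
    linarith

lemma Spart_deriv (α : ℝ) (N : ℕ) (τ : ℂ) :
    HasDerivAt (Spart α N) (-∑ k ∈ Finset.range N, (cA α k : ℂ) * τ ^ k) τ := by
  induction N with
  | zero =>
    have : Spart α 0 = fun _ => 1 := by ext; simp [Spart]
    rw [this]; simpa using hasDerivAt_const τ (1 : ℂ)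
  | succ N ih =>
    have : Spart α (N + 1) =
        fun σ => Spart α N σ - ((|gbinom α (N + 1)| : ℝ) : ℂ) * σ ^ (N + 1) := by
      ext σ
      simp only [Spart]
      rw [Finset.sum_Icc_succ_top (by omega)]
      ring
    rw [this]
    refine (ih.sub ((hasDerivAt_pow (N + 1) τ).const_mul _)).congr_deriv ?_
    rw [Finset.sum_range_succ]
    simp only [cA]
    push_cast
    ring

lemma main_deriv (α : ℝ) (h0 : 0 < α) (h : α < 1) (M : ℕ) (τ : ℂ) :
    HasDerivAt (fun σ : ℂ => (1 - σ) * -∑ k ∈ Finset.range (M + 1), (cA α k : ℂ) * σ ^ k)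
      (α * ∑ k ∈ Finset.range M, (cA α k : ℂ) * τ ^ k + (M + 1) * cA α M * τ ^ M) τ := by
  have hs : HasDerivAt (fun σ : ℂ => 1 - σ) (-1) τ := (hasDerivAt_id τ).const_sub 1
  induction M with
  | zero =>
    refine ((hs.mul_const (-(cA α 0 : ℂ))).congr_deriv (by simp)).congr_of_eventuallyEq ?_
    exact Filter.Eventually.of_forall fun σ => by simp
  | succ M ih =>
    have e : (fun σ : ℂ => (1 - σ) * -∑ k ∈ Finset.range (M + 1 + 1), (cA α k : ℂ) * σ ^ k) =
        fun σ => ((1 - σ) * -∑ k ∈ Finset.range (M + 1), (cA α k : ℂ) * σ ^ k) -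
          (1 - σ) * ((cA α (M + 1) : ℂ) * σ ^ (M + 1)) := by
      ext σ; rw [Finset.sum_range_succ _ (M + 1)]; ring
    rw [e]
    refine (ih.sub (hs.mul ((hasDerivAt_pow (M + 1) τ).const_mul (cA α (M + 1) : ℂ)))).congr_deriv ?_
    have hc : ((M : ℂ) + 1) * cA α (M + 1) = (M + 1 - α) * cA α M := by
      exact_mod_cast congrArg (fun x : ℝ => (x : ℂ)) (cA_succ α h M)
    rw [Finset.sum_range_succ]
    simp only [Nat.add_sub_cancel]
    push_cast
    linear_combination (-τ ^ M) * hc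

lemma P_ode (α : ℝ) (h : α < 1) (M : ℕ) (r : ℝ) :
    (1 - r) * ∑ k ∈ Finset.range (M + 1), cA α k * (k * r ^ (k - 1)) =
      (1 - α) * ∑ k ∈ Finset.range (M + 1), cA α k * r ^ k - (M + 1 - α) * cA α M * r ^ M := by
  induction M with
  | zero => simp
  | succ M ih =>
    rw [Finset.sum_range_succ, Finset.sum_range_succ _ (M + 1), mul_add, ih]
    have := cA_succ α h M
    simp only [Nat.add_sub_cancel]
    push_cast
    linear_combination r ^ M * this

lemma P_bound (α : ℝ) (h0 : 0 < α) (h : α < 1) (M : ℕ) (r : ℝ) (hr : 0 ≤ r) (hr1 : r < 1) :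
    ∑ k ∈ Finset.range (M + 1), cA α k * r ^ k ≤ α * (1 - r) ^ (α - 1) := by
  set P : ℝ → ℝ := fun r => ∑ k ∈ Finset.range (M + 1), cA α k * r ^ k with hP
  have hd : ∀ x, x < 1 → HasDerivAt (fun x => P x * (1 - x) ^ (1 - α))
      ((∑ k ∈ Finset.range (M + 1), cA α k * (k * x ^ (k - 1))) * (1 - x) ^ (1 - α) +
        P x * (-1 * (1 - α) * (1 - x) ^ (1 - α - 1))) x := by
    intro x hx
    have h1 : HasDerivAt P (∑ k ∈ Finset.range (M + 1), cA α k * (k * x ^ (k - 1))) x :=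
      HasDerivAt.fun_sum fun k _ => (hasDerivAt_pow k x).const_mul _
    exact h1.mul (((hasDerivAt_id x).const_sub 1).rpow_const (Or.inl (by simp; linarith)))
  have hanti : AntitoneOn (fun x => P x * (1 - x) ^ (1 - α)) (Set.Ico 0 1) := by
    apply antitoneOn_of_deriv_nonpos (convex_Ico 0 1)
    · exact fun x hx => (hd x hx.2).continuousAt.continuousWithinAt
    · intro x hx
      rw [interior_Ico] at hx
      exact (hd x hx.2).differentiableAt.differentiableWithinAt
    · intro x hx
      rw [interior_Ico] at hx
      rw [(hd x hx.2).deriv]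
      have hx1 : 0 < 1 - x := by linarith [hx.2]
      have e : (1 - x) ^ (1 - α) = (1 - x) ^ (1 - α - 1) * (1 - x) := by
        rw [← Real.rpow_add_one hx1.ne']; congr 1; ring
      have ode := P_ode α h M x
      have hq : 0 ≤ (1 - x) ^ (1 - α - 1) := (Real.rpow_pos_of_pos hx1 _).le
      have hz : 0 ≤ (1 - x) ^ (1 - α - 1) * ((M + 1 - α) * cA α M * x ^ M) := by
        have h3 : (0 : ℝ) ≤ M + 1 - α := by have := M.cast_nonneg (α := ℝ); linarith
        have := cA_nonneg α M
        have := hx.1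
        positivity
      rw [e]
      have : (∑ k ∈ Finset.range (M + 1), cA α k * (k * x ^ (k - 1))) *
            ((1 - x) ^ (1 - α - 1) * (1 - x)) + P x * (-1 * (1 - α) * (1 - x) ^ (1 - α - 1))
          = -((1 - x) ^ (1 - α - 1) * ((M + 1 - α) * cA α M * x ^ M)) := by
        simp only [hP]
        linear_combination (1 - x) ^ (1 - α - 1) * ode
      rw [this]; linarith
  have key := hanti (Set.mem_Ico.2 ⟨le_refl 0, one_pos⟩) (Set.mem_Ico.2 ⟨hr, hr1⟩) hr
  have hP0 : P 0 = α := by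
    simp only [hP]
    rw [Finset.sum_range_succ']
    simp [cA_zero α h0]
  simp only [hP0, sub_zero, Real.one_rpow, mul_one] at key
  have hr2 : 0 < 1 - r := by linarith
  have e : (1 - r) ^ (1 - α) * (1 - r) ^ (α - 1) = 1 := by
    rw [← Real.rpow_add hr2]; simp
  calc P r = P r * (1 - r) ^ (1 - α) * (1 - r) ^ (α - 1) := by rw [mul_assoc, e, mul_one]
    _ ≤ _ := by
      have := (Real.rpow_pos_of_pos hr2 (α - 1)).le
      gcongr

/-- `|((1-τ)S_N'(τ))'| ≤ c(1-|τ|)^(α-1)` on the open unit disc,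
with `c = α + α(1-α)`. -/
theorem stmt4 (α : ℝ) (hα0 : 0 < α) (hα1 : α < 1) (N : ℕ) (τ : ℂ) (hτ : ‖τ‖ < 1) :
    ‖deriv (fun σ : ℂ => (1 - σ) * deriv (Spart α N) σ) τ‖ ≤
      (α + α * (1 - α)) * (1 - ‖τ‖) ^ (α - 1) := by
  have hpos : 0 ≤ (1 - ‖τ‖) ^ (α - 1) := (Real.rpow_pos_of_pos (by linarith) _).le
  have hc : 0 ≤ α * (1 - α) := mul_nonneg hα0.le (by linarith)
  simp only [fun σ => (Spart_deriv α N σ).deriv]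
  cases N with
  | zero => simp; positivity
  | succ M =>
    rw [(main_deriv α hα0 hα1 M τ).deriv]
    have hr := norm_nonneg τ
    set r := ‖τ‖ with hrdef
    have h1 : ‖(α * ∑ k ∈ Finset.range M, (cA α k : ℂ) * τ ^ k + (M + 1) * cA α M * τ ^ M : ℂ)‖
        ≤ α * ∑ k ∈ Finset.range M, cA α k * r ^ k + (M + 1) * cA α M * r ^ M := by
      refine (norm_add_le _ _).trans (add_le_add ?_ ?_)
      · rw [norm_mul, Complex.norm_real, Real.norm_of_nonneg hα0.le]
        refine mul_le_mul_of_nonneg_left ((norm_sum_le _ _).trans (Finset.sum_le_sum ?_)) hα0.le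
        intro k _
        rw [norm_mul, norm_pow, Complex.norm_real, Real.norm_of_nonneg (cA_nonneg α k)]
      · rw [norm_mul, norm_mul, norm_pow, Complex.norm_real, Real.norm_of_nonneg (cA_nonneg α M)]
        have : ‖(M : ℂ) + 1‖ = M + 1 := by
          exact_mod_cast Complex.norm_natCast (M + 1)
        rw [this]
    have h2 : (∑ k ∈ Finset.range M, cA α k) * r ^ M ≤ ∑ k ∈ Finset.range M, cA α k * r ^ k := by
      rw [Finset.sum_mul]
      refine Finset.sum_le_sum fun k hk => mul_le_mul_of_nonneg_left ?_ (cA_nonneg α k)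
      exact pow_le_pow_of_le_one hr hτ.le (Finset.mem_range.1 hk).le
    have h3 := P_bound α hα0 hα1 M r hr hτ
    rw [Finset.sum_range_succ] at h3
    have h4 := cA_sum α hα1 M
    have h5 := mul_le_mul_of_nonneg_left h2 (show 0 ≤ 1 - α by linarith)
    have h6 : (M + 1) * cA α M * r ^ M =
        (1 - α) * ((∑ k ∈ Finset.range M, cA α k) * r ^ M) + cA α M * r ^ M := by
      linear_combination r ^ M * h4
    have h7 := mul_nonneg hc hpos
    linarith
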